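/- (Prony uniqueness) Let r be a positive integer. Let z_1,…,z_r ∈ ℂ be pairwise distinct and nonzero with amplitudes b_1,…,b_r ∈ ℂ all nonzero, and let w_1,…,w_r ∈ ℂ be pairwise distinct and nonzero with amplitudes c_1,…,c_r ∈ ℂ all nonzero. If Σ_{ℓ=1}^r b_ℓ z_ℓ^k = Σ_{ℓ=1}^r c_ℓ w_ℓ^k for every k = 0, 1, …, 2r−1, then the multisets of pairs {(z_ℓ, b_ℓ) : ℓ = 1,…,r} and {(w_ℓ, c_ℓ) : ℓ = 1,…,r} coincide; that is, there is a permutation σ of {1,…,r} with w_{σ(ℓ)} = z_ℓ and c_{σ(ℓ)} = b_ℓ for all ℓ. In particular, the two exponential sums agree for every integer k ≥ 0. -/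

import Mathlib

/-- **Prony uniqueness.** Two `r`-term exponential signals with pairwise distinct
nonzero nodes and nonzero amplitudes that agree on the `2r` samples
`k = 0, 1, …, 2r−1` have the same multiset of (node, amplitude) pairs, and in
particular agree on every sample `k ≥ 0`. -/
theorem prony_uniqueness
    (r : ℕ) (hr : 0 < r)
    (z w b c : Fin r → ℂ)
    (hz : Function.Injective z) (hz0 : ∀ ℓ, z ℓ ≠ 0) (hb : ∀ ℓ, b ℓ ≠ 0)
    (hw : Function.Injective w) (hw0 : ∀ ℓ, w ℓ ≠ 0) (hc : ∀ ℓ, c ℓ ≠ 0)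
    (h : ∀ k : ℕ, k < 2 * r → ∑ ℓ, b ℓ * z ℓ ^ k = ∑ ℓ, c ℓ * w ℓ ^ k) :
    (∃ σ : Equiv.Perm (Fin r), ∀ ℓ, w (σ ℓ) = z ℓ ∧ c (σ ℓ) = b ℓ) ∧
      ∀ k : ℕ, ∑ ℓ, b ℓ * z ℓ ^ k = ∑ ℓ, c ℓ * w ℓ ^ k := by
  classical
  have key : ∀ p : Polynomial ℂ, p.natDegree < 2 * r →
      ∑ ℓ, b ℓ * p.eval (z ℓ) = ∑ ℓ, c ℓ * p.eval (w ℓ) := by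
    intro p hp
    simp only [Polynomial.eval_eq_sum_range, Finset.mul_sum]
    rw [Finset.sum_comm, Finset.sum_comm (s := Finset.univ (α := Fin r))]
    refine Finset.sum_congr rfl fun k hk => ?_
    have hk' := h k (by have := Finset.mem_range.1 hk; omega)
    have e : ∀ x y : Fin r → ℂ, ∑ ℓ, x ℓ * (p.coeff k * y ℓ ^ k)
        = p.coeff k * ∑ ℓ, x ℓ * y ℓ ^ k := by
      intro x y
      rw [Finset.mul_sum]
      exact Finset.sum_congr rfl fun _ _ => by ring
    rw [e, e, hk']
  let L : Fin r → Polynomial ℂ := fun ℓ =>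
    ∏ j ∈ Finset.univ.erase ℓ, (Polynomial.X - Polynomial.C (z j))
  let W : Polynomial ℂ := ∏ j, (Polynomial.X - Polynomial.C (w j))
  have hLd : ∀ ℓ, (L ℓ).natDegree = r - 1 := by
    intro ℓ
    simp [L, Polynomial.natDegree_finsetProd_X_sub_C_eq_card]
  have hWd : W.natDegree = r := by
    simp [W, Polynomial.natDegree_finsetProd_X_sub_C_eq_card]
  have hL0 : ∀ ℓ j, j ≠ ℓ → (L ℓ).eval (z j) = 0 := by
    intro ℓ j hj
    simp only [L, Polynomial.eval_prod]
    exact Finset.prod_eq_zero (i := j) (by simp [hj]) (by simp)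
  have hL1 : ∀ ℓ, (L ℓ).eval (z ℓ) ≠ 0 := by
    intro ℓ
    simp only [L, Polynomial.eval_prod]
    refine Finset.prod_ne_zero_iff.2 fun j hj => ?_
    have hj' : j ≠ ℓ := (Finset.mem_erase.1 hj).1
    simpa [sub_eq_zero] using fun e => hj' (hz e).symm
  have hW0 : ∀ j, W.eval (w j) = 0 := by
    intro j
    simp only [W, Polynomial.eval_prod]
    exact Finset.prod_eq_zero (i := j) (by simp) (by simp)
  have hex : ∀ ℓ, ∃ j, w j = z ℓ := by
    intro ℓ
    by_contra hne
    push Not at hne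
    have hW1 : W.eval (z ℓ) ≠ 0 := by
      simp only [W, Polynomial.eval_prod]
      refine Finset.prod_ne_zero_iff.2 fun j _ => ?_
      simpa [sub_eq_zero] using (hne j).symm
    have hk := key (L ℓ * W) (by
      have := Polynomial.natDegree_mul_le (p := L ℓ) (q := W)
      rw [hLd, hWd] at this
      omega)
    rw [Finset.sum_eq_single ℓ (by intro j _ hj; simp [hL0 ℓ j hj]) (by simp)] at hk
    simp [hW0, hW1, hL1, hb] at hk
  choose s hs using hex
  have hsi : Function.Injective s := fun a a' e => hz (by rw [← hs, ← hs, e])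
  have hσ : ∃ σ : Equiv.Perm (Fin r), ∀ ℓ, w (σ ℓ) = z ℓ ∧ c (σ ℓ) = b ℓ := by
    refine ⟨Equiv.ofBijective s (Finite.injective_iff_bijective.1 hsi), fun ℓ => ⟨hs ℓ, ?_⟩⟩
    change c (s ℓ) = b ℓ
    have hk := key (L ℓ) (by rw [hLd]; omega)
    rw [← (Equiv.ofBijective s (Finite.injective_iff_bijective.1 hsi)).sum_comp
      (fun j => c j * (L ℓ).eval (w j))] at hk
    simp only [Equiv.ofBijective_apply, hs] at hk
    rw [Finset.sum_eq_single ℓ (by intro j _ hj; simp [hL0 ℓ j hj]) (by simp),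
      Finset.sum_eq_single ℓ (by intro j _ hj; simp [hL0 ℓ j hj]) (by simp)] at hk
    exact (mul_right_cancel₀ (hL1 ℓ) hk).symm
  refine ⟨hσ, fun k => ?_⟩
  obtain ⟨σ, hσ⟩ := hσ
  rw [← Equiv.sum_comp σ (fun j => c j * w j ^ k)]
  exact Finset.sum_congr rfl fun ℓ _ => by rw [(hσ ℓ).1, (hσ ℓ).2]
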